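/- arXiv:2002.11914 — 3 statements merged into one kernel-verified Lean document; each statement's English description precedes it below -/
import Mathlib

section
/- Let 0<α<1, 0<r<1 and λ>0. Let y ∈ C([0,T]) ∩ C¹((0,T]) satisfy |y′(t)| ≤ t^{−r} for all 0<t≤T, and let Π_τ^λ y be a piecewise-constant function on the graded grid satisfying, for every 1≤k≤J: (1/Γ(1−α)) ∫_0^{t_k} (y − Π_τ^λ y)(t)((t_k−t)^{−α} − (t_{k−1}−t)_+^{−α}) dt + λ ∫_{t_{k−1}}^{t_k} (y − Π_τ^λ y)(t) dt = 0. Then ‖y − Π_τ^λ y‖_{L^∞(0,T)} ≤ C J^{−min{σ(1−r),1}}, where the constant C depends only on α, σ, r, T (in particular C is independent of λ and J). -/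
open MeasureTheory

/-- The graded temporal grid `t_j = (j/J)^σ T`. -/
noncomputable def tg (T σ : ℝ) (J j : ℕ) : ℝ := ((j : ℝ) / (J : ℝ)) ^ σ * T

/-- The truncated power `(s)_+^e`: equal to `s^e` for `s > 0` and to `0` otherwise. -/
noncomputable def pp (e s : ℝ) : ℝ := if 0 < s then s ^ e else 0

lemma kal (M : ℕ → ℕ → ℝ) (hpos : ∀ n j, j ≤ n → 0 < M n j) (hz : ∀ n j, n < j → M n j = 0)
    (hr : ∀ n i j, i ≤ j → j ≤ n → M (n+1) j * M n i ≤ M (n+1) i * M n j) :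
    ∀ (n : ℕ) (u : ℕ → ℝ), (∀ j ≤ n, 0 ≤ u j) →
      (∀ i j, i ≤ j → j ≤ n → u j * M n i ≤ u i * M n j) →
      ∃ a : ℕ → ℝ, (∀ i, 0 ≤ a i) ∧ ∀ j ≤ n, u j = ∑ i ∈ Finset.range (n+1), a i * M i j := by
  intro n
  induction n with
  | zero =>
    intro u hu _
    refine ⟨fun _ => u 0 / M 0 0, fun _ => div_nonneg (hu 0 le_rfl) (hpos 0 0 le_rfl).le, ?_⟩
    intro j hj
    obtain rfl : j = 0 := by omega
    have := (hpos 0 0 le_rfl).ne'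
    simp
    field_simp
  | succ n ih =>
    intro u hu hc
    have hnn := hpos (n+1) (n+1) le_rfl
    set b := u (n+1) / M (n+1) (n+1) with hb
    have hb0 : 0 ≤ b := div_nonneg (hu _ le_rfl) hnn.le
    have hbu : u (n+1) = b * M (n+1) (n+1) := by rw [hb]; field_simp
    have hx : ∀ j ≤ n, 0 ≤ u j - b * M (n+1) j := by
      intro j hj
      have h := hc j (n+1) (by omega) le_rfl
      rw [hbu] at h
      have : b * M (n+1) j * M (n+1) (n+1) ≤ u j * M (n+1) (n+1) := by linarith
      have := le_of_mul_le_mul_right this hnn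
      linarith
    obtain ⟨a, ha, hau⟩ := ih (fun j => u j - b * M (n+1) j) hx (by
      intro i j hij hj
      have h1 := hc i j hij (by omega)
      have h2 := hr n i j hij hj
      have hp := hpos (n+1) j (by omega)
      have hq := hpos n j hj
      have h3 : (u j - b * M (n+1) j) * M (n+1) i ≤ (u i - b * M (n+1) i) * M (n+1) j := by
        linarith
      have h4 := mul_le_mul_of_nonneg_left h2 (hx j hj)
      have h5 := mul_le_mul_of_nonneg_right h3 hq.le
      refine le_of_mul_le_mul_right ?_ hp
      linarith)
    refine ⟨fun i => if i = n+1 then b else a i, ?_, ?_⟩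
    · intro i
      dsimp only
      split_ifs
      · exact hb0
      · exact ha i
    · intro j hj
      rw [Finset.sum_range_succ]
      have : ∑ i ∈ Finset.range (n+1), (if i = n+1 then b else a i) * M i j
          = ∑ i ∈ Finset.range (n+1), a i * M i j := by
        apply Finset.sum_congr rfl
        intro i hi
        rw [if_neg (by simp at hi; omega)]
      rw [this]
      simp only [if_true]
      rcases Nat.lt_or_ge n j with h | h
      · obtain rfl : j = n+1 := by omega
        rw [Finset.sum_eq_zero, hbu]
        · ring
        · intro i hi
          rw [hz i (n+1) (by simpa using hi)]; simp
      · rw [← hau j h]; ring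

lemma kalbound (M : ℕ → ℕ → ℝ) (hpos : ∀ n j, j ≤ n → 0 < M n j) (hz : ∀ n j, n < j → M n j = 0)
    (hr : ∀ n i j, i ≤ j → j ≤ n → M (n+1) j * M n i ≤ M (n+1) i * M n j)
    (hanti : Antitone (fun n => M n 0)) (g G z : ℕ → ℝ) (hg : Monotone g) (J : ℕ)
    (hG : ∀ n < J, |G n| ≤ g n)
    (hs : ∀ n < J, ∑ j ∈ Finset.range (n+1), M n j * z j = G n) (n : ℕ) (hn : n < J) :
    |z n| * M n n ≤ 2 * g n := by
  have hnn := hpos n n le_rfl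
  rw [← abs_of_pos hnn, ← abs_mul, mul_comm (z n)]
  cases n with
  | zero =>
    have := hs 0 hn
    simp at this
    rw [this]
    have h := hG 0 hn
    have := abs_nonneg (G 0)
    linarith
  | succ m =>
    obtain ⟨a, ha, hau⟩ := kal M hpos hz hr m (M (m+1)) (fun j hj => (hpos _ _ (by omega)).le)
      (fun i j hij hj => hr m i j hij hj)
    have hsum : ∑ i ∈ Finset.range (m+1), a i ≤ 1 := by
      have h0 := hau 0 (by omega)
      have hp := hpos (m+1) 0 (by omega)
      have : (∑ i ∈ Finset.range (m+1), a i) * M (m+1) 0 ≤ 1 * M (m+1) 0 := by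
        rw [one_mul, Finset.sum_mul]
        conv_rhs => rw [h0]
        apply Finset.sum_le_sum
        intro i hi
        apply mul_le_mul_of_nonneg_left _ (ha i)
        exact hanti (by simp at hi; omega)
      exact le_of_mul_le_mul_right this hp
    have key : ∑ j ∈ Finset.range (m+1), M (m+1) j * z j = ∑ i ∈ Finset.range (m+1), a i * G i := by
      have h1 : ∀ i ∈ Finset.range (m+1), a i * G i
          = ∑ j ∈ Finset.range (m+1), a i * M i j * z j := by
        intro i hi
        simp at hi
        rw [← hs i (by omega), Finset.mul_sum]
        rw [← Finset.sum_subset (s₁ := Finset.range (i+1)) (s₂ := Finset.range (m+1))]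
        · apply Finset.sum_congr rfl; intros; ring
        · intro x; simp; omega
        · intro x _ hx
          rw [hz i x (by simp at hx; omega)]; simp
      rw [Finset.sum_congr rfl h1, Finset.sum_comm]
      apply Finset.sum_congr rfl
      intro j hj
      rw [← Finset.sum_mul, ← hau j (by simp at hj; omega)]
    have h2 := hs (m+1) hn
    rw [Finset.sum_range_succ, key] at h2
    have h3 : M (m+1) (m+1) * z (m+1) = G (m+1) - ∑ i ∈ Finset.range (m+1), a i * G i := by linarith
    rw [h3]
    have h4 : |∑ i ∈ Finset.range (m+1), a i * G i| ≤ g (m+1) := by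
      calc _ ≤ ∑ i ∈ Finset.range (m+1), |a i * G i| := Finset.abs_sum_le_sum_abs _ _
        _ ≤ ∑ i ∈ Finset.range (m+1), a i * g (m+1) := by
          apply Finset.sum_le_sum
          intro i hi
          simp at hi
          rw [abs_mul, abs_of_nonneg (ha i)]
          apply mul_le_mul_of_nonneg_left _ (ha i)
          exact (hG i (by omega)).trans (hg (by omega))
        _ = (∑ i ∈ Finset.range (m+1), a i) * g (m+1) := by rw [Finset.sum_mul]
        _ ≤ 1 * g (m+1) := mul_le_mul_of_nonneg_right hsum ((abs_nonneg _).trans (hG _ hn))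
        _ = _ := one_mul _
    have h5 := abs_sub (G (m+1)) (∑ i ∈ Finset.range (m+1), a i * G i)
    have := hG _ hn
    linarith

lemma logconv (α L x x' h : ℝ) (hα : 0 < α) (hL : 0 ≤ L) (hx : 0 < x) (hxx : x ≤ x') (hh : 0 ≤ h) :
    ((x+h)^(-α) + L) * (x'^(-α) + L) ≤ ((x'+h)^(-α) + L) * (x^(-α) + L) := by
  have hx' : 0 < x' := by linarith
  have e1 : (x+h)^(-α) * x'^(-α) ≤ (x'+h)^(-α) * x^(-α) := by
    rw [← Real.mul_rpow (by linarith) (by linarith), ← Real.mul_rpow (by linarith) (by linarith)]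
    apply Real.rpow_le_rpow_of_nonpos (by positivity) (by nlinarith) (by linarith)
  have e2 : (x+h)^(-α) ≤ x^(-α) := Real.rpow_le_rpow_of_nonpos hx (by linarith) (by linarith)
  have e3 : x'^(-α) ≤ x^(-α) := Real.rpow_le_rpow_of_nonpos hx (by linarith) (by linarith)
  have p1 : 0 < x^(-α) := Real.rpow_pos_of_pos hx _
  have e4 : (x+h)^(-α) + x'^(-α) ≤ (x'+h)^(-α) + x^(-α) := by
    have : ((x+h)^(-α) + x'^(-α)) * x^(-α) ≤ ((x'+h)^(-α) + x^(-α)) * x^(-α) := by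
      nlinarith [mul_nonneg (sub_nonneg.2 e2) (sub_nonneg.2 e3)]
    exact le_of_mul_le_mul_right this p1
  nlinarith [mul_le_mul_of_nonneg_left e4 hL]

lemma ii (α a b c : ℝ) (hα1 : α < 1) :
    IntervalIntegrable (fun s : ℝ => (c - s)^(-α)) volume a b := by
  have := (intervalIntegral.intervalIntegrable_rpow' (a := c - a) (b := c - b) (r := -α) (by linarith)).comp_sub_left c
  simpa using this

lemma bern (β : ℝ) (hβ : 0 < β) (J j : ℕ) (hj : j + 1 ≤ J) :
    ((j:ℝ)+1)^β - (j:ℝ)^β ≤ max 1 β * (J:ℝ)^(β - min β 1) := by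
  have hJ : (j:ℝ) + 1 ≤ J := by exact_mod_cast hj
  have hj0 : (0:ℝ) ≤ j := by positivity
  rcases le_total β 1 with h | h
  · rw [min_eq_left h, max_eq_left h]
    simp
    have := Real.rpow_add_le_add_rpow hj0 zero_le_one hβ.le h
    simp at this
    linarith
  · rw [min_eq_right h, max_eq_right h]
    have hp : (0:ℝ) < (j:ℝ)+1 := by positivity
    have b := one_add_mul_self_le_rpow_one_add (s := -1/((j:ℝ)+1)) (by rw [le_div_iff₀ hp]; linarith) h
    have e : (j:ℝ) = ((j:ℝ)+1) * (1 + -1/((j:ℝ)+1)) := by field_simp; ring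
    have e2 : (j:ℝ)^β = ((j:ℝ)+1)^β * (1 + -1/((j:ℝ)+1))^β := by
      rw [← Real.mul_rpow hp.le, ← e]
      have : 1 + -1/((j:ℝ)+1) = j / ((j:ℝ)+1) := by field_simp; ring
      rw [this]; positivity
    have h1 : ((j:ℝ)+1)^β = ((j:ℝ)+1)^(β-1) * ((j:ℝ)+1) := by
      rw [← Real.rpow_add_one hp.ne']; simp
    have h2 : ((j:ℝ)+1)^(β-1) ≤ (J:ℝ)^(β-1) := Real.rpow_le_rpow hp.le hJ (by linarith)
    have h3 := mul_le_mul_of_nonneg_left b (Real.rpow_pos_of_pos hp β).le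
    rw [← e2] at h3
    have h4 : ((j:ℝ)+1)^β * (1 + β * (-1/((j:ℝ)+1))) = ((j:ℝ)+1)^β - β * ((j:ℝ)+1)^(β-1) := by
      rw [h1]; field_simp; ring
    nlinarith

lemma osc (T r : ℝ) (hr1 : r < 1) (y y' : ℝ → ℝ) (hy : ContinuousOn y (Set.Icc 0 T))
    (hd : ∀ s ∈ Set.Ioc (0 : ℝ) T, HasDerivWithinAt y (y' s) (Set.Ioc 0 T) s)
    (hb : ∀ s ∈ Set.Ioc (0 : ℝ) T, |y' s| ≤ s ^ (-r)) (a b : ℝ) (ha : 0 ≤ a) (hab : a ≤ b) (hbT : b ≤ T) :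
    |y b - y a| ≤ (b^(1-r) - a^(1-r)) / (1-r) := by
  have h1r : 0 < 1 - r := by linarith
  have cp : ContinuousOn (fun s : ℝ => s^(1-r)/(1-r)) (Set.Icc 0 T) :=
    ((Real.continuous_rpow_const h1r.le).div_const _).continuousOn
  have dy : ∀ s ∈ Set.Ioo 0 T, HasDerivAt y (y' s) s := fun s hs =>
    (hd s ⟨hs.1, hs.2.le⟩).hasDerivAt (Ioc_mem_nhds hs.1 hs.2)
  have dp : ∀ s ∈ Set.Ioo 0 T, HasDerivAt (fun s : ℝ => s^(1-r)/(1-r)) (s^(-r)) s := by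
    intro s hs
    have := (Real.hasDerivAt_rpow_const (x := s) (p := 1 - r) (Or.inl hs.1.ne')).div_const (1-r)
    have e : (1 - r) * s ^ (1 - r - 1) / (1 - r) = s^(-r) := by
      rw [show 1 - r - 1 = -r by ring]; field_simp
    rw [e] at this
    exact this
  have m1 : MonotoneOn (fun s => s^(1-r)/(1-r) - y s) (Set.Icc 0 T) := by
    apply monotoneOn_of_deriv_nonneg (convex_Icc 0 T) (cp.sub hy)
    · rw [interior_Icc]; intro s hs
      exact ((dp s hs).sub (dy s hs)).differentiableAt.differentiableWithinAt
    · rw [interior_Icc]; intro s hs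
      have := ((dp s hs).sub (dy s hs)).deriv
      have e := abs_le.1 (hb s ⟨hs.1, hs.2.le⟩)
      erw [this]; linarith [e.2]
  have m2 : MonotoneOn (fun s => s^(1-r)/(1-r) + y s) (Set.Icc 0 T) := by
    apply monotoneOn_of_deriv_nonneg (convex_Icc 0 T) (cp.add hy)
    · rw [interior_Icc]; intro s hs
      exact ((dp s hs).add (dy s hs)).differentiableAt.differentiableWithinAt
    · rw [interior_Icc]; intro s hs
      have := ((dp s hs).add (dy s hs)).deriv
      have e := abs_le.1 (hb s ⟨hs.1, hs.2.le⟩)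
      erw [this]; linarith [e.1]
  have A : a ∈ Set.Icc 0 T := ⟨ha, by linarith⟩
  have B : b ∈ Set.Icc 0 T := ⟨by linarith, hbT⟩
  have k1 := m1 A B hab
  have k2 := m2 A B hab
  simp only at k1 k2
  rw [abs_le, sub_div]
  constructor <;> linarith

lemma near_int (α a b : ℝ) (hα1 : α < 1) :
    ∫ s in a..b, (b - s)^(-α) = (b-a)^(1-α)/(1-α) := by
  rw [intervalIntegral.integral_comp_sub_left (fun x : ℝ => x^(-α)) b, integral_rpow (Or.inl (by linarith))]
  rw [sub_self, show -α + 1 = 1 - α by ring, Real.zero_rpow (by linarith), sub_zero]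

lemma cellavg (q : ℝ → ℝ) (a b D : ℝ) (hab : a < b) (hq : ContinuousOn q (Set.Icc a b))
    (ho : ∀ x ∈ Set.Icc a b, ∀ z ∈ Set.Icc a b, |q x - q z| ≤ D) :
    ∃ c : ℝ, (∀ s ∈ Set.Icc a b, |q s - c| ≤ D) ∧ ∫ s in a..b, (q s - c) = 0 := by
  have hi : IntervalIntegrable q volume a b := by
    apply ContinuousOn.intervalIntegrable; rwa [Set.uIcc_of_le hab.le]
  have hba : 0 < b - a := by linarith
  refine ⟨(∫ s in a..b, q s) / (b - a), ?_, ?_⟩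
  · intro s hs
    have h1 : q s - (∫ x in a..b, q x) / (b - a) = (∫ x in a..b, (q s - q x)) / (b - a) := by
      rw [intervalIntegral.integral_sub intervalIntegrable_const hi]
      simp
      field_simp
    rw [h1, abs_div, abs_of_pos hba, div_le_iff₀ hba]
    have := intervalIntegral.norm_integral_le_of_norm_le_const (a := a) (b := b)
      (f := fun x => q s - q x) (C := D) (by
        intro x hx
        rw [Set.uIoc_of_le hab.le] at hx
        exact ho s hs x ⟨hx.1.le, hx.2⟩)
    rwa [abs_of_pos hba, Real.norm_eq_abs] at this
  · rw [intervalIntegral.integral_sub hi intervalIntegrable_const]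
    simp
    field_simp
    ring

lemma cellfar (v : ℝ → ℝ) (α a b c D : ℝ) (hα0 : 0 < α) (hα1 : α < 1) (hab : a < b) (hbc : b < c)
    (hv : ContinuousOn v (Set.Icc a b))
    (hD : ∀ s ∈ Set.Icc a b, |v s| ≤ D) (h0 : ∫ s in a..b, v s = 0) :
    |∫ s in a..b, v s * (c - s)^(-α)| ≤ D * ((c-b)^(-α) - (c-a)^(-α)) * (b - a) := by
  have hv' : ContinuousOn v (Set.uIcc a b) := by rwa [Set.uIcc_of_le hab.le]
  have e : ∫ s in a..b, v s * (c - s)^(-α) = ∫ s in a..b, v s * ((c - s)^(-α) - (c-a)^(-α)) := by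
    simp_rw [mul_sub]
    rw [intervalIntegral.integral_sub ((ii α a b c hα1).continuousOn_mul hv')
      (hv'.intervalIntegrable.mul_const _), intervalIntegral.integral_mul_const, h0]
    ring
  rw [e]
  have := intervalIntegral.norm_integral_le_of_norm_le_const (a := a) (b := b)
      (f := fun s => v s * ((c - s)^(-α) - (c-a)^(-α))) (C := D * ((c-b)^(-α) - (c-a)^(-α))) (by
        intro x hx
        rw [Set.uIoc_of_le hab.le] at hx
        have k1 : (c-a)^(-α) ≤ (c-x)^(-α) :=
          Real.rpow_le_rpow_of_nonpos (by linarith [hx.2]) (by linarith [hx.1]) (by linarith)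
        have k2 : (c-x)^(-α) ≤ (c-b)^(-α) :=
          Real.rpow_le_rpow_of_nonpos (by linarith [hx.2]) (by linarith [hx.2]) (by linarith)
        have k3 := hD x ⟨hx.1.le, hx.2⟩
        rw [norm_mul, Real.norm_eq_abs, Real.norm_eq_abs, abs_of_nonneg (sub_nonneg.2 k1)]
        have := abs_nonneg (v x)
        apply mul_le_mul k3 (by linarith) (by linarith) (by linarith))
  rwa [abs_of_pos (sub_pos.2 hab), Real.norm_eq_abs] at this

lemma cellnear (v : ℝ → ℝ) (α a b D : ℝ) (hα1 : α < 1) (hab : a < b)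
    (hD : ∀ s ∈ Set.Icc a b, |v s| ≤ D) :
    |∫ s in a..b, v s * (b - s)^(-α)| ≤ D * ((b-a)^(1-α)/(1-α)) := by
  rw [← near_int α a b hα1, ← intervalIntegral.integral_const_mul,
    ← Real.norm_eq_abs]
  apply intervalIntegral.norm_integral_le_of_norm_le hab.le
  · refine Filter.Eventually.of_forall fun s hs => ?_
    have hp : 0 ≤ (b - s)^(-α) := Real.rpow_nonneg (by linarith [hs.2]) _
    rw [norm_mul, Real.norm_eq_abs, Real.norm_eq_abs, abs_of_nonneg hp]
    exact mul_le_mul_of_nonneg_right (hD s ⟨hs.1.le, hs.2⟩) hp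
  · exact (ii α a b b hα1).const_mul _

lemma absmain (α L D : ℝ) (hα0 : 0 < α) (hα1 : α < 1) (hL : 0 ≤ L) (t : ℕ → ℝ) (ht : StrictMono t)
    (hτ : Monotone fun j => t (j+1) - t j) (J : ℕ) (y : ℝ → ℝ) (p : ℕ → ℝ)
    (hy : ∀ j < J, ContinuousOn y (Set.Icc (t j) (t (j+1)))) 
    (ho : ∀ j < J, ∀ x ∈ Set.Icc (t j) (t (j+1)), ∀ z ∈ Set.Icc (t j) (t (j+1)), |y x - y z| ≤ D)
    (heq : ∀ n < J, ∑ j ∈ Finset.range (n+1),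
      ∫ s in t j..t (j+1), (y s - p j) * ((t (n+1) - s)^(-α) + L) = 0) :
    ∀ j < J, ∀ s ∈ Set.Icc (t j) (t (j+1)), |y s - p j| ≤ 5 * D := by
  intro j hjJ s hs
  have h1α : 0 < 1 - α := by linarith
  have hD0 : 0 ≤ D := (abs_nonneg _).trans (ho j hjJ s hs s hs)
  have hlt : ∀ j, t j < t (j+1) := fun j => ht (Nat.lt_succ_self j)
  have hav : ∀ j, ∃ c : ℝ, j < J → (∀ s ∈ Set.Icc (t j) (t (j+1)), |y s - p j - c| ≤ D) ∧
      ∫ s in t j..t (j+1), (y s - p j - c) = 0 := by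
    intro j
    by_cases hj : j < J
    · obtain ⟨c, h1, h2⟩ := cellavg (fun s => y s - p j) (t j) (t (j+1)) D (hlt j)
        ((hy j hj).sub continuousOn_const) (by
          intro x hx z hz
          have := ho j hj x hx z hz
          simpa using this)
      exact ⟨c, fun _ => ⟨h1, h2⟩⟩
    · exact ⟨0, fun h => absurd h hj⟩
  choose c hc using hav
  have hk : ∀ a b c, IntervalIntegrable (fun s : ℝ => (c - s)^(-α) + L) volume a b :=
    fun a b c => (ii α a b c hα1).add intervalIntegrable_const
  set M : ℕ → ℕ → ℝ := fun i j => if j ≤ i then ∫ s in t j..t (j+1), ((t (i+1) - s)^(-α) + L) else 0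
    with hM
  have hMe : ∀ i j, j ≤ i → M i j = ∫ s in t j..t (j+1), ((t (i+1) - s)^(-α) + L) := by
    intro i j h; simp [hM, h]
  have hkpos : ∀ x : ℝ, 0 < x → 0 < x^(-α) + L := fun x hx => by
    have := Real.rpow_pos_of_pos hx (-α); linarith
  have hpos : ∀ n j, j ≤ n → 0 < M n j := by
    intro n j h
    rw [hMe n j h]
    apply intervalIntegral.intervalIntegral_pos_of_pos_on (hk _ _ _) _ (hlt j)
    intro x hx
    apply hkpos
    have : t (j+1) ≤ t (n+1) := ht.monotone (by omega)
    linarith [hx.2]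
  have hz : ∀ n j, n < j → M n j = 0 := by
    intro n j h; simp [hM, h]
  have hr : ∀ n i j, i ≤ j → j ≤ n → M (n+1) j * M n i ≤ M (n+1) i * M n j := by
    intro n i j hij hjn
    rcases hij.eq_or_lt with rfl | hij
    · exact le_rfl
    have hx0 : 0 < t (n+1) - t j := sub_pos.2 (ht (by omega))
    have hh : 0 < t (n+2) - t (n+1) := sub_pos.2 (ht (by omega))
    have hx1 : 0 < t (n+2) - t j := sub_pos.2 (ht (by omega))
    set A := (t (n+2) - t j)^(-α) + L
    set B := (t (n+1) - t j)^(-α) + L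
    have hA : 0 < A := hkpos _ hx1
    have hB : 0 < B := hkpos _ hx0
    have r1 : M (n+1) j * B ≤ A * M n j := by
      rw [hMe _ _ (by omega), hMe _ _ hjn, ← intervalIntegral.integral_mul_const,
        ← intervalIntegral.integral_const_mul]
      apply intervalIntegral.integral_mono_on_of_le_Ioo (hlt j).le ((hk _ _ _).mul_const _)
        ((hk _ _ _).const_mul _)
      intro x hx
      have : t (j+1) ≤ t (n+1) := ht.monotone (by omega)
      have := logconv α L (t (n+1) - x) (t (n+1) - t j) (t (n+2) - t (n+1)) hα0 hL
        (by linarith [hx.2]) (by linarith [hx.1]) hh.le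
      simpa [A, B] using this
    have r2 : A * M n i ≤ M (n+1) i * B := by
      rw [hMe _ _ (by omega), hMe _ _ (by omega), ← intervalIntegral.integral_mul_const,
        ← intervalIntegral.integral_const_mul]
      apply intervalIntegral.integral_mono_on_of_le_Ioo (hlt i).le ((hk _ _ _).const_mul _)
        ((hk _ _ _).mul_const _)
      intro x hx
      have : t (i+1) ≤ t j := ht.monotone (by omega)
      have := logconv α L (t (n+1) - t j) (t (n+1) - x) (t (n+2) - t (n+1)) hα0 hL
        hx0 (by linarith [hx.2]) hh.le
      simpa [A, B] using this
    have p1 := hpos n i (by omega)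
    have p2 := hpos n j hjn
    have q1 := mul_le_mul_of_nonneg_right r1 p1.le
    have q2 := mul_le_mul_of_nonneg_right r2 p2.le
    refine le_of_mul_le_mul_right ?_ hB
    linarith
  have hanti : Antitone (fun n => M n 0) := by
    apply antitone_nat_of_succ_le
    intro n
    rw [hMe _ _ (by omega), hMe _ _ (by omega)]
    apply intervalIntegral.integral_mono_on_of_le_Ioo (hlt 0).le (hk _ _ _) (hk _ _ _)
    intro x hx
    have h1 : t (0+1) ≤ t (n+1) := ht.monotone (by omega)
    have h2 := hlt (n+1)
    have := Real.rpow_le_rpow_of_nonpos (x := t (n+1) - x) (y := t (n+1+1) - x) (z := -α)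
      (by linarith [hx.2]) (by linarith) (by linarith)
    linarith
  set g : ℕ → ℝ := fun n => D * (1 + 1/(1-α)) * (t (n+1) - t n)^(1-α) with hg
  have hgm : Monotone g := by
    intro m n hmn
    have := hτ hmn
    simp only at this
    apply mul_le_mul_of_nonneg_left _ (by positivity)
    exact Real.rpow_le_rpow (by linarith [hlt m]) this h1α.le
  set G : ℕ → ℝ := fun n => - ∑ j ∈ Finset.range (n+1),
    ∫ s in t j..t (j+1), (y s - p j - c j) * (t (n+1) - s)^(-α) with hG
  have hcv : ∀ j < J, ContinuousOn (fun s => y s - p j - c j) (Set.uIcc (t j) (t (j+1))) := by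
    intro j hj
    rw [Set.uIcc_of_le (hlt j).le]
    exact ((hy j hj).sub continuousOn_const).sub continuousOn_const
  have hsum : ∀ n < J, ∑ j ∈ Finset.range (n+1), M n j * c j = G n := by
    intro n hn
    have e := heq n hn
    have : ∀ j ∈ Finset.range (n+1),
      ∫ s in t j..t (j+1), (y s - p j) * ((t (n+1) - s)^(-α) + L) =
        M n j * c j + ∫ s in t j..t (j+1), (y s - p j - c j) * (t (n+1) - s)^(-α) := by
      intro j hj
      simp at hj
      have hjJ : j < J := by omega
      have i1 : IntervalIntegrable (fun s => c j * ((t (n+1) - s)^(-α) + L)) volume (t j) (t (j+1)) :=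
        (hk _ _ _).const_mul _
      have i2 := (ii α (t j) (t (j+1)) (t (n+1)) hα1).continuousOn_mul (hcv j hjJ)
      have i3 := (hcv j hjJ).intervalIntegrable.mul_const (μ := volume) L
      have e1 : (fun s => (y s - p j) * ((t (n+1) - s)^(-α) + L)) = fun s =>
        c j * ((t (n+1) - s)^(-α) + L) + ((y s - p j - c j) * (t (n+1) - s)^(-α) +
          (y s - p j - c j) * L) := by
        funext s; ring
      rw [e1, intervalIntegral.integral_add i1 (i2.add i3), intervalIntegral.integral_add i2 i3,
        intervalIntegral.integral_mul_const, (hc j hjJ).2, intervalIntegral.integral_const_mul,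
        hMe n j (by omega)]
      ring
    rw [Finset.sum_congr rfl this, Finset.sum_add_distrib] at e
    simp only [hG]
    linarith
  have hGb : ∀ n < J, |G n| ≤ g n := by
    intro n hn
    have hτn : 0 < t (n+1) - t n := sub_pos.2 (hlt n)
    simp only [hG, hg, abs_neg]
    rw [Finset.sum_range_succ]
    have near := cellnear (fun s => y s - p n - c n) α (t n) (t (n+1)) D hα1 (hlt n) (hc n hn).1
    have far : |∑ j ∈ Finset.range n, ∫ s in t j..t (j+1), (y s - p j - c j) * (t (n+1) - s)^(-α)|
        ≤ D * (t (n+1) - t n)^(1-α) := by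
      calc _ ≤ ∑ j ∈ Finset.range n, |∫ s in t j..t (j+1), (y s - p j - c j) * (t (n+1) - s)^(-α)| :=
            Finset.abs_sum_le_sum_abs _ _
        _ ≤ ∑ j ∈ Finset.range n, D * (t (n+1) - t n) * ((t (n+1) - t (j+1))^(-α) - (t (n+1) - t j)^(-α)) := by
            apply Finset.sum_le_sum
            intro j hj
            simp at hj
            have hjJ : j < J := by omega
            have f := cellfar (fun s => y s - p j - c j) α (t j) (t (j+1)) (t (n+1)) D hα0 hα1 (hlt j)
              (ht (by omega)) (by simpa [Set.uIcc_of_le (hlt j).le] using hcv j hjJ) (hc j hjJ).1 (hc j hjJ).2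
            have m := hτ hj.le
            simp only at m
            have l1 : t (j+1) < t (n+1) := ht (by omega)
            have l2 := hlt j
            have k := Real.rpow_le_rpow_of_nonpos (x := t (n+1) - t (j+1)) (y := t (n+1) - t j) (z := -α)
              (by linarith) (by linarith) (by linarith)
            have := mul_le_mul_of_nonneg_left m (mul_nonneg hD0 (sub_nonneg.2 k))
            linarith
        _ = D * (t (n+1) - t n) * ((t (n+1) - t n)^(-α) - (t (n+1) - t 0)^(-α)) := by
            rw [← Finset.mul_sum, Finset.sum_range_sub (fun j => (t (n+1) - t j)^(-α))]
        _ ≤ D * (t (n+1) - t n) * (t (n+1) - t n)^(-α) := by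
            apply mul_le_mul_of_nonneg_left _ (by positivity)
            have : t 0 < t (n+1) := ht (by omega)
            have := Real.rpow_nonneg (sub_nonneg.2 this.le) (-α)
            linarith
        _ = _ := by
            rw [mul_assoc, mul_comm (t (n+1) - t n), ← Real.rpow_add_one hτn.ne']
            ring_nf
    refine (abs_add_le _ _).trans ?_
    have : D * (1 + 1/(1-α)) * (t (n+1) - t n)^(1-α) = D * (t (n+1) - t n)^(1-α) +
      D * ((t (n+1) - t n)^(1-α)/(1-α)) := by ring
    rw [this]
    exact add_le_add far near
  have fin := kalbound M hpos hz hr hanti g G c hgm J hGb hsum j hjJ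
  have hτj : 0 < t (j+1) - t j := sub_pos.2 (hlt j)
  have P : 0 < (t (j+1) - t j)^(1-α) := Real.rpow_pos_of_pos hτj _
  have Mjj : (t (j+1) - t j)^(1-α)/(1-α) ≤ M j j := by
    rw [hMe j j le_rfl, intervalIntegral.integral_add (ii α _ _ _ hα1) intervalIntegrable_const,
      near_int α _ _ hα1]
    simp
    positivity
  have hcj : |c j| ≤ 4 * D := by
    have h1 := (mul_le_mul_of_nonneg_left Mjj (abs_nonneg (c j))).trans fin
    simp only [hg] at h1
    have h2 : |c j| * ((t (j+1) - t j)^(1-α)/(1-α)) ≤ (2 * D * (2 - α)) * ((t (j+1) - t j)^(1-α)/(1-α)) := by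
      refine h1.trans (le_of_eq ?_)
      field_simp
      ring
    have h3 := le_of_mul_le_mul_right h2 (by positivity)
    nlinarith
  have h5 := (hc j hjJ).1 s hs
  rw [abs_le] at h5 hcj ⊢
  constructor <;> linarith [h5.1, h5.2, hcj.1, hcj.2]

lemma tg_strictMono (T σ : ℝ) (hT : 0 < T) (hσ : 1 ≤ σ) (J : ℕ) (hJ : 0 < J) :
    StrictMono (tg T σ J) := by
  intro a b hab
  have hJ' : (0:ℝ) < J := by exact_mod_cast hJ
  have hab' : (a:ℝ) < b := by exact_mod_cast hab
  unfold tg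
  apply mul_lt_mul_of_pos_right _ hT
  apply Real.rpow_lt_rpow (by positivity) _ (by linarith)
  exact div_lt_div_of_pos_right hab' hJ'

lemma tg_eq (T σ : ℝ) (J j : ℕ) : tg T σ J j = (j:ℝ)^σ * (T / (J:ℝ)^σ) := by
  unfold tg
  rw [Real.div_rpow (by positivity) (by positivity)]
  ring

lemma tg_step_mono (T σ : ℝ) (hT : 0 < T) (hσ : 1 ≤ σ) (J : ℕ) :
    Monotone fun j => tg T σ J (j+1) - tg T σ J j := by
  apply monotone_nat_of_le_succ
  intro n
  simp only [tg_eq]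
  have m1 : (n:ℝ) ∈ Set.Ici (0:ℝ) := Set.mem_Ici.2 (Nat.cast_nonneg n)
  have m2 : ((n+1+1:ℕ):ℝ) ∈ Set.Ici (0:ℝ) := Set.mem_Ici.2 (Nat.cast_nonneg (n+1+1))
  have half : (0:ℝ) ≤ 1/2 := by norm_num
  have hone : (1/2:ℝ) + 1/2 = 1 := by norm_num
  have c := And.right (convexOn_rpow hσ) m1 m2 half half hone
  have e : (1/2:ℝ) • (n:ℝ) + (1/2:ℝ) • ((n+1+1:ℕ):ℝ) = ((n+1:ℕ):ℝ) := by
    simp only [smul_eq_mul]; push_cast; ring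
  rw [e] at c
  simp only [smul_eq_mul] at c
  have hp : 0 ≤ T / (J:ℝ)^σ := by positivity
  rw [← sub_mul, ← sub_mul]
  apply mul_le_mul_of_nonneg_right _ hp
  linarith

lemma tg_osc (T σ r : ℝ) (hT : 0 < T) (hσ : 1 ≤ σ) (hr1 : r < 1) (J j : ℕ) (hj : j < J) :
    ((tg T σ J (j+1))^(1-r) - (tg T σ J j)^(1-r)) / (1-r) ≤
      (T^(1-r)/(1-r) * max 1 (σ*(1-r))) * (J:ℝ)^(-min (σ*(1-r)) 1) := by
  have h1r : 0 < 1 - r := by linarith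
  have hJ' : (0:ℝ) < J := by exact_mod_cast (by omega : 0 < J)
  have hβ : 0 < σ*(1-r) := by positivity
  have e : ∀ i : ℕ, (tg T σ J i)^(1-r) = (i:ℝ)^(σ*(1-r)) * (J:ℝ)^(-(σ*(1-r))) * T^(1-r) := by
    intro i
    unfold tg
    rw [Real.mul_rpow (by positivity) hT.le, ← Real.rpow_mul (by positivity),
      Real.div_rpow (by positivity) (by positivity), Real.rpow_neg hJ'.le]
    rfl
  rw [e, e]
  have b := bern (σ*(1-r)) hβ J j hj
  have s : (J:ℝ)^(σ*(1-r) - min (σ*(1-r)) 1) * (J:ℝ)^(-(σ*(1-r))) = (J:ℝ)^(-min (σ*(1-r)) 1) := by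
    rw [← Real.rpow_add hJ']; ring_nf
  have hp : 0 ≤ (J:ℝ)^(-(σ*(1-r))) * (T^(1-r)/(1-r)) := by positivity
  have := mul_le_mul_of_nonneg_right b hp
  rw [← s]
  push_cast
  calc _ = _ := ?_
    _ ≤ _ := this
    _ = _ := ?_
  · ring
  · ring

lemma pp_ii (α a b c : ℝ) (hα1 : α < 1) :
    IntervalIntegrable (fun s : ℝ => pp (-α) (c - s)) volume a b := by
  have h := ii α a b c hα1
  have e : (fun s : ℝ => pp (-α) (c - s)) = (Set.Iio c).indicator (fun s => (c-s)^(-α)) := by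
    funext s
    unfold pp Set.indicator
    simp
  rw [e, intervalIntegrable_iff]
  rw [intervalIntegrable_iff] at h
  exact MeasureTheory.Integrable.indicator h measurableSet_Iio

lemma split_cells (t : ℕ → ℝ) (ht : StrictMono t) (y Pi : ℝ → ℝ) (p : ℕ → ℝ) (J : ℕ)
    (hy : ∀ j < J, ContinuousOn y (Set.Icc (t j) (t (j+1))))
    (hp : ∀ j < J, ∀ s ∈ Set.Ioo (t j) (t (j+1)), Pi s = p j) (φ : ℝ → ℝ)
    (hφ : ∀ a b, IntervalIntegrable φ volume a b) (k : ℕ) (hk : k ≤ J) :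
    ∫ s in Set.Ioo (t 0) (t k), (y s - Pi s) * φ s =
      ∑ j ∈ Finset.range k, ∫ s in t j..t (j+1), (y s - p j) * φ s := by
  have hlt : ∀ j, t j < t (j+1) := fun j => ht (Nat.lt_succ_self j)
  have hi : ∀ j < J, IntervalIntegrable (fun s => (y s - p j) * φ s) volume (t j) (t (j+1)) := by
    intro j hj
    apply (hφ _ _).continuousOn_mul
    rw [Set.uIcc_of_le (hlt j).le]
    exact (hy j hj).sub continuousOn_const
  have hi2 : ∀ j < J, IntervalIntegrable (fun s => (y s - Pi s) * φ s) volume (t j) (t (j+1)) := by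
    intro j hj
    have := hi j hj
    rw [intervalIntegrable_iff_integrableOn_Ioo_of_le (hlt j).le] at this ⊢
    refine this.congr_fun ?_ measurableSet_Ioo
    intro s hs
    simp only [hp j hj s hs]
  rw [← MeasureTheory.integral_Ioc_eq_integral_Ioo,
    ← intervalIntegral.integral_of_le (ht.monotone (Nat.zero_le k)),
    ← intervalIntegral.sum_integral_adjacent_intervals (fun j hj => hi2 j (by omega))]
  apply Finset.sum_congr rfl
  intro j hj
  have hj : j < J := by simp at hj; omega
  rw [intervalIntegral.integral_of_le (hlt j).le, intervalIntegral.integral_of_le (hlt j).le,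
    MeasureTheory.integral_Ioc_eq_integral_Ioo, MeasureTheory.integral_Ioc_eq_integral_Ioo]
  apply MeasureTheory.setIntegral_congr_fun measurableSet_Ioo
  intro s hs
  simp only [hp j hj s hs]

/-- Lemma 3.5 (lem:err-Pi): let `0 < α < 1`, `0 < r < 1`.  There is a constant
`C = C(α,σ,r,T) > 0`, independent of `λ` and `J`, such that whenever
`y ∈ C([0,T]) ∩ C¹((0,T])` satisfies `|y′(t)| ≤ t^{−r}` on `(0,T]` and `Π` is a
piecewise-constant function on the graded grid satisfying the Galerkin equations of the
scheme, then `‖y − Π‖_{L^∞(0,T)} ≤ C J^{−min{σ(1−r),1}}` (stated pointwise on the open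
grid intervals). -/
theorem stmt6 (T σ α r : ℝ) (hT : 0 < T) (hσ : 1 ≤ σ) (hα0 : 0 < α) (hα1 : α < 1)
    (hr0 : 0 < r) (hr1 : r < 1) :
    ∃ C : ℝ, 0 < C ∧ ∀ J : ℕ, 0 < J → ∀ lam : ℝ, 0 < lam → ∀ y y' : ℝ → ℝ,
      ContinuousOn y (Set.Icc 0 T) →
      (∀ s ∈ Set.Ioc (0 : ℝ) T, HasDerivWithinAt y (y' s) (Set.Ioc 0 T) s) →
      ContinuousOn y' (Set.Ioc 0 T) →
      (∀ s ∈ Set.Ioc (0 : ℝ) T, |y' s| ≤ s ^ (-r)) →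
      ∀ Pi : ℝ → ℝ,
      (∀ j : ℕ, 1 ≤ j → j ≤ J →
        ∀ s₁ ∈ Set.Ioo (tg T σ J (j - 1)) (tg T σ J j),
        ∀ s₂ ∈ Set.Ioo (tg T σ J (j - 1)) (tg T σ J j), Pi s₁ = Pi s₂) →
      (∀ k : ℕ, 1 ≤ k → k ≤ J →
        (Real.Gamma (1 - α))⁻¹ *
            (∫ s in Set.Ioo 0 (tg T σ J k),
              (y s - Pi s) * ((tg T σ J k - s) ^ (-α) - pp (-α) (tg T σ J (k - 1) - s))) +
          lam * ∫ s in Set.Ioo (tg T σ J (k - 1)) (tg T σ J k), (y s - Pi s) = 0) →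
      ∀ j : ℕ, 1 ≤ j → j ≤ J → ∀ s ∈ Set.Ioo (tg T σ J (j - 1)) (tg T σ J j),
        |y s - Pi s| ≤ C * (J : ℝ) ^ (-min (σ * (1 - r)) 1) := by
  have h1r : 0 < 1 - r := by linarith
  have hC0 : 0 < T^(1-r)/(1-r) * max 1 (σ*(1-r)) := by positivity
  refine ⟨5 * (T^(1-r)/(1-r) * max 1 (σ*(1-r))), by linarith, ?_⟩
  intro J hJ lam hlam y y' hy hd _ hb Pi hPi heq
  have ht := tg_strictMono T σ hT hσ J hJ
  have hτ := tg_step_mono T σ hT hσ J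
  have hosc0 := fun j hj => tg_osc T σ r hT hσ hr1 J j hj
  have ht0 : tg T σ J 0 = 0 := by
    unfold tg; simp [Real.zero_rpow (by linarith : σ ≠ 0)]
  have htJ : tg T σ J J = T := by
    unfold tg; rw [div_self (by positivity)]; simp
  generalize tg T σ J = t at *
  set D := T^(1-r)/(1-r) * max 1 (σ*(1-r)) * (J : ℝ) ^ (-min (σ * (1 - r)) 1) with hD
  have hlt : ∀ j, t j < t (j+1) := fun j => ht (Nat.lt_succ_self j)
  have hsub : ∀ j < J, Set.Icc (t j) (t (j+1)) ⊆ Set.Icc 0 T := by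
    intro j hj
    apply Set.Icc_subset_Icc
    · rw [← ht0]; exact ht.monotone (by omega)
    · rw [← htJ]; exact ht.monotone (by omega)
  have hyc : ∀ j < J, ContinuousOn y (Set.Icc (t j) (t (j+1))) := fun j hj => hy.mono (hsub j hj)
  have hosc1 : ∀ j < J, ∀ x ∈ Set.Icc (t j) (t (j+1)), ∀ z ∈ Set.Icc (t j) (t (j+1)), x ≤ z →
      |y z - y x| ≤ D := by
    intro j hj x hx z hz hxz
    have X := hsub j hj hx
    have Z := hsub j hj hz
    refine (osc T r hr1 y y' hy hd hb x z X.1 hxz Z.2).trans (le_trans ?_ (hosc0 j hj))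
    have tj : 0 ≤ t j := by rw [← ht0]; exact ht.monotone (by omega)
    have k1 : (t j)^(1-r) ≤ x^(1-r) := Real.rpow_le_rpow tj hx.1 h1r.le
    have k2 : z^(1-r) ≤ (t (j+1))^(1-r) := Real.rpow_le_rpow Z.1 hz.2 h1r.le
    apply div_le_div_of_nonneg_right _ h1r.le
    linarith
  have ho : ∀ j < J, ∀ x ∈ Set.Icc (t j) (t (j+1)), ∀ z ∈ Set.Icc (t j) (t (j+1)),
      |y x - y z| ≤ D := by
    intro j hj x hx z hz
    rcases le_total x z with h | h
    · rw [abs_sub_comm]; exact hosc1 j hj x hx z hz h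
    · exact hosc1 j hj z hz x hx h
  set p : ℕ → ℝ := fun j => Pi ((t j + t (j+1))/2) with hp
  have hPp : ∀ j < J, ∀ s ∈ Set.Ioo (t j) (t (j+1)), Pi s = p j := by
    intro j hj s hs
    have := hPi (j+1) (by omega) (by omega)
    rw [Nat.add_sub_cancel] at this
    exact this s hs _ ⟨by linarith [hlt j], by linarith [hlt j]⟩
  have hGam : 0 < Real.Gamma (1 - α) := Real.Gamma_pos_of_pos (by linarith)
  set L := lam * Real.Gamma (1 - α) with hL
  have hqc : ∀ j < J, ContinuousOn (fun s => y s - p j) (Set.uIcc (t j) (t (j+1))) := by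
    intro j hj
    rw [Set.uIcc_of_le (hlt j).le]
    exact (hyc j hj).sub continuousOn_const
  set F : ℕ → ℝ := fun n => ∑ j ∈ Finset.range n, ∫ s in t j..t (j+1), (y s - p j) * (t n - s)^(-α) with hF
  set H : ℕ → ℝ := fun n => ∑ j ∈ Finset.range n, ∫ s in t j..t (j+1), (y s - p j) with hH
  have hFH : ∀ n ≤ J, F n + L * H n = 0 := by
    intro n
    induction n with
    | zero => intro _; simp [hF, hH]
    | succ n ih =>
      intro hn
      have ih := ih (by omega)
      have e := heq (n+1) (by omega) hn
      rw [Nat.add_sub_cancel] at e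
      have e1 := split_cells t ht y Pi p J hyc hPp
        (fun s => (t (n+1) - s)^(-α) - pp (-α) (t n - s))
        (fun a b => (ii α a b _ hα1).sub (pp_ii α a b _ hα1)) (n+1) hn
      rw [ht0] at e1
      rw [e1] at e
      have e2 : ∫ s in Set.Ioo (t n) (t (n+1)), (y s - Pi s) = ∫ s in t n..t (n+1), (y s - p n) := by
        rw [intervalIntegral.integral_of_le (hlt n).le, MeasureTheory.integral_Ioc_eq_integral_Ioo]
        apply MeasureTheory.setIntegral_congr_fun measurableSet_Ioo
        intro s hs
        simp only [hPp n (by omega) s hs]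
      have e3 : ∀ j ∈ Finset.range (n+1),
          ∫ s in t j..t (j+1), (y s - p j) * ((t (n+1) - s)^(-α) - pp (-α) (t n - s)) =
          (∫ s in t j..t (j+1), (y s - p j) * (t (n+1) - s)^(-α)) -
          ∫ s in t j..t (j+1), (y s - p j) * pp (-α) (t n - s) := by
        intro j hj
        have hj : j < J := by simp at hj; omega
        simp_rw [mul_sub]
        exact intervalIntegral.integral_sub ((ii α _ _ _ hα1).continuousOn_mul (hqc j hj))
          ((pp_ii α _ _ _ hα1).continuousOn_mul (hqc j hj))
      have e4 : ∑ j ∈ Finset.range (n+1), ∫ s in t j..t (j+1), (y s - p j) * pp (-α) (t n - s)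
          = F n := by
        rw [Finset.sum_range_succ]
        have z : ∫ s in t n..t (n+1), (y s - p n) * pp (-α) (t n - s) = 0 := by
          rw [intervalIntegral.integral_of_le (hlt n).le]
          apply MeasureTheory.setIntegral_eq_zero_of_forall_eq_zero
          intro s hs
          unfold pp
          rw [if_neg (by linarith [hs.1])]
          ring
        rw [z, add_zero]
        apply Finset.sum_congr rfl
        intro j hj
        have hj : j + 1 ≤ n := by simp at hj; omega
        have := ht.monotone hj
        rw [intervalIntegral.integral_of_le (hlt j).le, intervalIntegral.integral_of_le (hlt j).le,
          MeasureTheory.integral_Ioc_eq_integral_Ioo, MeasureTheory.integral_Ioc_eq_integral_Ioo]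
        apply MeasureTheory.setIntegral_congr_fun measurableSet_Ioo
        intro s hs
        simp only [pp]
        rw [if_pos (by linarith [hs.2])]
      rw [Finset.sum_congr rfl e3, Finset.sum_sub_distrib, e4, e2] at e
      have e5 : H (n+1) = H n + ∫ s in t n..t (n+1), (y s - p n) := Finset.sum_range_succ _ _
      have e6 : (∫ s in t n..t (n+1), (y s - p n)) = H (n+1) - H n := by linarith
      rw [e6] at e
      change (Real.Gamma (1-α))⁻¹ * (F (n+1) - F n) + lam * (H (n+1) - H n) = 0 at e
      field_simp at e
      rw [hL] at ih ⊢
      linarith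
  have hmain := absmain α L D hα0 hα1 (by positivity) t ht hτ J y p hyc ho (by
    intro n hn
    have := hFH (n+1) (by omega)
    simp only [hF, hH] at this
    rw [Finset.mul_sum, ← Finset.sum_add_distrib] at this
    rw [← this]
    apply Finset.sum_congr rfl
    intro j hj
    have hj : j < J := by simp at hj; omega
    rw [← intervalIntegral.integral_const_mul, ← intervalIntegral.integral_add
      ((ii α _ _ _ hα1).continuousOn_mul (hqc j hj)) ((hqc j hj).intervalIntegrable.const_mul _)]
    congr 1
    funext s
    ring)
  intro j hj1 hjJ s hs
  obtain ⟨i, rfl⟩ : ∃ i, j = i + 1 := ⟨j - 1, by omega⟩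
  rw [Nat.add_sub_cancel] at hs
  rw [hPp i (by omega) s hs, mul_assoc]
  exact hmain i (by omega) s ⟨hs.1.le, hs.2.le⟩
end

section
/- For any 0<β<1 and any real numbers 0 ≤ t < a < b < c < d: ((d−t)^{1−β} − (d−a)^{1−β}) / ((d−a)^{1−β} − (d−b)^{1−β}) > ((c−t)^{1−β} − (c−a)^{1−β}) / ((c−a)^{1−β} − (c−b)^{1−β}). -/
theorem aux_ratio (β x y c d : ℝ) (hβ1 : β < 1)
    (hxy : x < y) (hyc : y < c) (hcd : c < d) :
    ∃ ξ ∈ Set.Ioo x y, (d - x) ^ (1 - β) - (d - y) ^ (1 - β)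
      = ((c - ξ) / (d - ξ)) ^ β * ((c - x) ^ (1 - β) - (c - y) ^ (1 - β)) := by
  have key : ∀ e : ℝ, y < e → ∀ s ≤ y,
      HasDerivAt (fun s : ℝ => (e - s) ^ (1 - β)) (-(1 - β) * (e - s) ^ (-β)) s := by
    intro e he s hs
    have h := ((hasDerivAt_id' s).const_sub e).rpow_const (p := 1 - β)
      (Or.inl (by linarith : e - s ≠ 0))
    convert h using 1
    rw [show 1 - β - 1 = -β by ring]
    ring
  obtain ⟨ξ, hξ, h⟩ := exists_ratio_hasDerivAt_eq_ratio_slope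
    (fun s : ℝ => (d - s) ^ (1 - β)) (fun s => -(1 - β) * (d - s) ^ (-β)) hxy
    (fun s hs => (key d (hyc.trans hcd) s hs.2).continuousAt.continuousWithinAt)
    (fun s hs => key d (hyc.trans hcd) s hs.2.le)
    (fun s : ℝ => (c - s) ^ (1 - β)) (fun s => -(1 - β) * (c - s) ^ (-β))
    (fun s hs => (key c hyc s hs.2).continuousAt.continuousWithinAt)
    (fun s hs => key c hyc s hs.2.le)
  refine ⟨ξ, hξ, ?_⟩
  have hc : 0 < c - ξ := by linarith [hξ.2]
  have hd : 0 < d - ξ := by linarith [hξ.2]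
  have hcp := Real.rpow_pos_of_pos hc β
  have hdp := Real.rpow_pos_of_pos hd β
  simp only [Real.rpow_neg hc.le, Real.rpow_neg hd.le] at h
  rw [Real.div_rpow hc.le hd.le]
  have hb : 1 - β ≠ 0 := by linarith
  field_simp at h ⊢
  linarith

/-- Lemma A.4 (lem:31): for `0 < β < 1` and `0 ≤ t < a < b < c < d`,
`((d−t)^{1−β} − (d−a)^{1−β}) / ((d−a)^{1−β} − (d−b)^{1−β})
  > ((c−t)^{1−β} − (c−a)^{1−β}) / ((c−a)^{1−β} − (c−b)^{1−β})`. -/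
theorem stmt15 (β t a b c d : ℝ) (hβ0 : 0 < β) (hβ1 : β < 1)
    (ht : 0 ≤ t) (hta : t < a) (hab : a < b) (hbc : b < c) (hcd : c < d) :
    ((d - t) ^ (1 - β) - (d - a) ^ (1 - β)) / ((d - a) ^ (1 - β) - (d - b) ^ (1 - β)) >
      ((c - t) ^ (1 - β) - (c - a) ^ (1 - β)) / ((c - a) ^ (1 - β) - (c - b) ^ (1 - β)) := by
  obtain ⟨u, hu, h1⟩ := aux_ratio β t a c d hβ1 hta (hab.trans hbc) hcd
  obtain ⟨v, hv, h2⟩ := aux_ratio β a b c d hβ1 hab hbc hcd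
  have hp : 0 < 1 - β := by linarith
  have g1 : 0 < (c - t) ^ (1 - β) - (c - a) ^ (1 - β) :=
    sub_pos.2 (Real.rpow_lt_rpow (by linarith) (by linarith) hp)
  have g2 : 0 < (c - a) ^ (1 - β) - (c - b) ^ (1 - β) :=
    sub_pos.2 (Real.rpow_lt_rpow (by linarith) (by linarith) hp)
  have hcv : 0 < c - v := by linarith [hv.2]
  have hdv : 0 < d - v := by linarith [hv.2]
  have huv : u < v := hu.2.trans hv.1
  have hdu : 0 < d - u := by linarith
  have hr0 : 0 < ((c - v) / (d - v)) ^ β := Real.rpow_pos_of_pos (div_pos hcv hdv) β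
  have hr : ((c - v) / (d - v)) ^ β < ((c - u) / (d - u)) ^ β := by
    apply Real.rpow_lt_rpow (div_pos hcv hdv).le _ hβ0
    rw [div_lt_div_iff₀ hdv hdu]
    nlinarith [mul_pos (sub_pos.2 huv) (sub_pos.2 hcd)]
  rw [h1, h2, gt_iff_lt, div_lt_div_iff₀ g2 (mul_pos hr0 g2)]
  nlinarith [mul_lt_mul_of_pos_right hr (mul_pos g1 g2)]
end

section
/- For any 0<β<1, any μ ≥ 0, and any real numbers 0 ≤ t < a < b < c < d: ((d−t)^{1−β} − (d−a)^{1−β} + μ(a−t)) / ((d−a)^{1−β} − (d−b)^{1−β} + μ(b−a)) > ((c−t)^{1−β} − (c−a)^{1−β} + μ(a−t)) / ((c−a)^{1−β} − (c−b)^{1−β} + μ(b−a)). -/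
lemma aux_ratio_s16 (β μ u v δ : ℝ) (hβ0 : 0 < β) (hβ1 : β < 1) (hμ : 0 ≤ μ)
    (hv : 0 < v) (huv : v < u) (hδ : 0 < δ) :
    ((1 - β) * (v + δ) ^ (-β) + μ) * ((1 - β) * u ^ (-β) + μ) <
      ((1 - β) * (u + δ) ^ (-β) + μ) * ((1 - β) * v ^ (-β) + μ) := by
  have hu : 0 < u := hv.trans huv
  have hnb : -β < 0 := by linarith
  have h1 : (v + δ) ^ (-β) * u ^ (-β) < (u + δ) ^ (-β) * v ^ (-β) := by
    rw [← Real.mul_rpow (by linarith) hu.le, ← Real.mul_rpow (by linarith) hv.le]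
    exact Real.rpow_lt_rpow_of_neg (by positivity) (by nlinarith) hnb
  have h2 : (v + δ) ^ (-β) < v ^ (-β) := Real.rpow_lt_rpow_of_neg hv (by linarith) hnb
  have h3 : u ^ (-β) < v ^ (-β) := Real.rpow_lt_rpow_of_neg hv huv hnb
  have hA : 0 < v ^ (-β) := Real.rpow_pos_of_pos hv _
  generalize v ^ (-β) = A at *
  generalize u ^ (-β) = C at *
  generalize (v + δ) ^ (-β) = B at *
  generalize (u + δ) ^ (-β) = E at *
  have h4 : B + C < A + E := by
    have : A * (B + C) < A * (A + E) := by nlinarith [mul_pos (sub_pos.2 h2) (sub_pos.2 h3)]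
    exact lt_of_mul_lt_mul_left this hA.le
  have hp : 0 < 1 - β := by linarith
  have h5 := mul_lt_mul_of_pos_left h1 (mul_pos hp hp)
  have h6 := mul_le_mul_of_nonneg_left h4.le (mul_nonneg hp.le hμ)
  nlinarith

lemma aux_deriv (β μ x s : ℝ) (h : s < x) :
    HasDerivAt (fun s : ℝ => -(x - s) ^ (1 - β) + μ * s)
      ((1 - β) * (x - s) ^ (-β) + μ) s := by
  have h1 : HasDerivAt (fun s : ℝ => x - s) (-1) s := by
    simpa using (hasDerivAt_id s).const_sub x
  have h2 := (h1.rpow_const (p := 1 - β) (Or.inl (by linarith))).neg.add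
    ((hasDerivAt_id s).const_mul μ)
  have e : -(-1 * (1 - β) * (x - s) ^ (1 - β - 1)) + μ * 1 = (1 - β) * (x - s) ^ (-β) + μ := by
    rw [show 1 - β - 1 = -β by ring]
    ring
  rw [e] at h2
  exact h2

lemma aux_mvt (β μ l r c d : ℝ) (hlr : l < r) (hrc : r < c) (hcd : c < d) :
    ∃ ξ, l < ξ ∧ ξ < r ∧
      ((c - l) ^ (1 - β) - (c - r) ^ (1 - β) + μ * (r - l)) * ((1 - β) * (d - ξ) ^ (-β) + μ) =
      ((d - l) ^ (1 - β) - (d - r) ^ (1 - β) + μ * (r - l)) * ((1 - β) * (c - ξ) ^ (-β) + μ) := by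
  obtain ⟨ξ, hξ, h⟩ := exists_ratio_hasDerivAt_eq_ratio_slope
    (fun s : ℝ => -(d - s) ^ (1 - β) + μ * s) (fun s => (1 - β) * (d - s) ^ (-β) + μ) hlr
    (fun s hs => (aux_deriv β μ d s (by linarith [hs.2])).continuousAt.continuousWithinAt)
    (fun s hs => aux_deriv β μ d s (by linarith [hs.2]))
    (fun s : ℝ => -(c - s) ^ (1 - β) + μ * s) (fun s => (1 - β) * (c - s) ^ (-β) + μ)
    (fun s hs => (aux_deriv β μ c s (by linarith [hs.2])).continuousAt.continuousWithinAt)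
    (fun s hs => aux_deriv β μ c s (by linarith [hs.2]))
  refine ⟨ξ, hξ.1, hξ.2, ?_⟩
  linear_combination h

lemma aux_pos (β μ l r x : ℝ) (hβ1 : β < 1) (hμ : 0 ≤ μ) (hlr : l < r) (hrx : r < x) :
    0 < (x - l) ^ (1 - β) - (x - r) ^ (1 - β) + μ * (r - l) := by
  have h1 : (x - r) ^ (1 - β) < (x - l) ^ (1 - β) :=
    Real.rpow_lt_rpow (by linarith) (by linarith) (by linarith)
  have h2 : 0 ≤ μ * (r - l) := mul_nonneg hμ (by linarith)
  linarith

/-- Lemma A.5 (lem:pre-G): for `0 < β < 1`, `μ ≥ 0` and `0 ≤ t < a < b < c < d`,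
`((d−t)^{1−β} − (d−a)^{1−β} + μ(a−t)) / ((d−a)^{1−β} − (d−b)^{1−β} + μ(b−a))
  > ((c−t)^{1−β} − (c−a)^{1−β} + μ(a−t)) / ((c−a)^{1−β} − (c−b)^{1−β} + μ(b−a))`. -/
theorem stmt16 (β μ t a b c d : ℝ) (hβ0 : 0 < β) (hβ1 : β < 1) (hμ : 0 ≤ μ)
    (ht : 0 ≤ t) (hta : t < a) (hab : a < b) (hbc : b < c) (hcd : c < d) :
    ((d - t) ^ (1 - β) - (d - a) ^ (1 - β) + μ * (a - t)) /
        ((d - a) ^ (1 - β) - (d - b) ^ (1 - β) + μ * (b - a)) >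
      ((c - t) ^ (1 - β) - (c - a) ^ (1 - β) + μ * (a - t)) /
        ((c - a) ^ (1 - β) - (c - b) ^ (1 - β) + μ * (b - a)) := by
  obtain ⟨ξ, _, hξ, e1⟩ := aux_mvt β μ t a c d hta (hab.trans hbc) hcd
  obtain ⟨η, hη, hη', e2⟩ := aux_mvt β μ a b c d hab hbc hcd
  have k := aux_ratio_s16 β μ (c - ξ) (c - η) (d - c) hβ0 hβ1 hμ (by linarith) (by linarith)
    (by linarith)
  rw [show c - η + (d - c) = d - η by ring, show c - ξ + (d - c) = d - ξ by ring] at k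
  have p1 := aux_pos β μ t a c hβ1 hμ hta (by linarith)
  have p3 := aux_pos β μ a b c hβ1 hμ hab (by linarith)
  have p4 := aux_pos β μ a b d hβ1 hμ hab (by linarith)
  have q : ∀ y : ℝ, 0 < y → 0 < (1 - β) * y ^ (-β) + μ := fun y hy => by
    have := mul_pos (sub_pos.2 hβ1) (Real.rpow_pos_of_pos hy (-β))
    linarith
  have q1 := q (c - ξ) (by linarith)
  have q2 := q (c - η) (by linarith)
  rw [gt_iff_lt, div_lt_div_iff₀ p3 p4]
  generalize (1 - β) * (c - ξ) ^ (-β) + μ = g1 at *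
  generalize (1 - β) * (c - η) ^ (-β) + μ = g2 at *
  generalize (1 - β) * (d - ξ) ^ (-β) + μ = f1 at *
  generalize (1 - β) * (d - η) ^ (-β) + μ = f2 at *
  generalize (c - t) ^ (1 - β) - (c - a) ^ (1 - β) + μ * (a - t) = Nc at *
  generalize (d - t) ^ (1 - β) - (d - a) ^ (1 - β) + μ * (a - t) = Nd at *
  generalize (c - a) ^ (1 - β) - (c - b) ^ (1 - β) + μ * (b - a) = Dc at *
  generalize (d - a) ^ (1 - β) - (d - b) ^ (1 - β) + μ * (b - a) = Dd at *
  have k2 := mul_lt_mul_of_pos_left k (mul_pos p1 p3)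
  refine lt_of_mul_lt_mul_right ?_ (mul_pos q1 q2).le
  calc Nc * Dd * (g1 * g2) = Nc * Dc * (f2 * g1) := by linear_combination -Nc * g1 * e2
    _ < Nc * Dc * (f1 * g2) := k2
    _ = Nd * Dc * (g1 * g2) := by linear_combination Dc * g2 * e1
end
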